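/- arXiv:2509.02373 — 3 statements merged into one kernel-verified Lean document; each statement's English description precedes it below -/
import Mathlib

section
/- Fix integers c ≥ 2 and m̄ ≥ 1, take fair partitioning probabilities p_j = 1/c for all j = 1, …, c, and let N̄ : ℕ → ℝ be the PSR sequence for these parameters. Then for every δ > m̄ one has N̄_δ ≤ 8 e (c+1) δ / (m̄ + 1), where e is Euler's number. -/
/-!
Solved for `N δ`, the PSR recursion is the equation `N δ = 1 + ∑ j, E[N (Bin(δ, p j))]`, so any `V`
with `1 ≤ V` on `[0, m]` and `1 + ∑ j, E[V (Bin(δ, p j))] ≤ V δ` for `δ > m` dominates `N`.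
With `c` partitions and `s = 2 / (m + 1)`, take `V δ = 1 + 4 c (s δ - 1 + (1 - s) ^ δ)`. Inside the
bracket, splitting preserves `s δ` since `∑ j, p j = 1`, turns `-1` into `-c`, and turns
`(1 - s) ^ δ` into `∑ j, (1 - s p j) ^ δ ≤ ∑ j, exp (-2 p j)`. When no `p j` exceeds `1 / 2`, the
chord of `exp` over `[-1, 0]` bounds this by `c - 5 / 4`, so the bracket drops by at least `1 / 4`,
and the factor `4 c` makes this pay for the `c` recursive calls.
-/

open Finset

/-- The expectation of `f` under the binomial distribution with `n` trials and success
probability `p`, as an explicit finite sum. -/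
def binomialMean (n : ℕ) (p : ℝ) (f : ℕ → ℝ) : ℝ :=
  ∑ i ∈ range (n + 1), (n.choose i : ℝ) * p ^ i * (1 - p) ^ (n - i) * f i

section BinomialMean

variable (n : ℕ) (p : ℝ)

lemma binomialMean_eq_sum_range_add (f : ℕ → ℝ) :
    binomialMean n p f =
      ∑ i ∈ range n, (n.choose i : ℝ) * p ^ i * (1 - p) ^ (n - i) * f i + p ^ n * f n := by
  simp [binomialMean, sum_range_succ]

lemma binomialMean_add (f g : ℕ → ℝ) :
    binomialMean n p (fun i ↦ f i + g i) = binomialMean n p f + binomialMean n p g := by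
  simp only [binomialMean, mul_add, sum_add_distrib]

lemma binomialMean_const_mul (a : ℝ) (f : ℕ → ℝ) :
    binomialMean n p (fun i ↦ a * f i) = a * binomialMean n p f := by
  simp only [binomialMean, mul_sum, mul_left_comm a]

lemma binomialMean_pow (x : ℝ) : binomialMean n p (fun i ↦ x ^ i) = (p * x + (1 - p)) ^ n := by
  rw [binomialMean, add_pow]
  exact sum_congr rfl fun i _ ↦ by rw [mul_pow]; ring

lemma binomialMean_const (a : ℝ) : binomialMean n p (fun _ ↦ a) = a := by
  simpa using (binomialMean_const_mul n p a fun i ↦ 1 ^ i).trans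
    (congrArg (a * ·) (binomialMean_pow n p 1))

lemma binomialMean_natCast : binomialMean n p (fun i ↦ (i : ℝ)) = n * p := by
  have h := congrArg (Polynomial.eval p) (bernsteinPolynomial.sum_smul ℝ n)
  simp only [Polynomial.eval_finsetSum, nsmul_eq_mul, bernsteinPolynomial, Polynomial.eval_mul,
    Polynomial.eval_natCast, Polynomial.eval_pow, Polynomial.eval_X, Polynomial.eval_sub,
    Polynomial.eval_one] at h
  rw [← h, binomialMean]
  exact sum_congr rfl fun i _ ↦ by ring

end BinomialMean

/-- `N` is a PSR sequence with recovery capacity `m` and partitions indexed by the finite set `J`,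
chosen with probabilities `p j`. If `∑ j ∈ J, p j ^ δ = 1`, division by zero makes `eq_div` assert
`N δ = 0`. -/
structure IsPSRSequence {ι : Type*} (J : Finset ι) (p : ι → ℝ) (m : ℕ) (N : ℕ → ℝ) : Prop where
  eq_one : ∀ δ, δ ≤ m → N δ = 1
  eq_div : ∀ δ, m < δ → N δ =
    (1 + ∑ j ∈ J, ∑ i ∈ range δ, (δ.choose i : ℝ) * p j ^ i * (1 - p j) ^ (δ - i) * N i) /
      (1 - ∑ j ∈ J, p j ^ δ)

section Bounds

variable {ι : Type*} {J : Finset ι} {p : ι → ℝ} {m : ℕ} {N : ℕ → ℝ}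

lemma IsPSRSequence.eq_one_add_sum_binomialMean (hN : IsPSRSequence J p m N) {δ : ℕ} (hδ : m < δ)
    (hp : ∑ j ∈ J, p j ^ δ ≠ 1) : N δ = 1 + ∑ j ∈ J, binomialMean δ (p j) N := by
  have h := hN.eq_div δ hδ
  rw [eq_div_iff (sub_ne_zero.2 hp.symm)] at h
  simp only [binomialMean_eq_sum_range_add, sum_add_distrib, ← sum_mul]
  linarith

lemma IsPSRSequence.le_of_supersolution (hN : IsPSRSequence J p m N)
    (hp0 : ∀ j ∈ J, 0 ≤ p j) (hp : ∀ δ, m < δ → ∑ j ∈ J, p j ^ δ < 1)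
    {V : ℕ → ℝ} (hV1 : ∀ δ, δ ≤ m → 1 ≤ V δ)
    (hV : ∀ δ, m < δ → 1 + ∑ j ∈ J, binomialMean δ (p j) V ≤ V δ) (δ : ℕ) : N δ ≤ V δ := by
  induction δ using Nat.strong_induction_on with
  | _ δ ih =>
    rcases le_or_gt δ m with hδ | hδ
    · exact (hN.eq_one δ hδ).trans_le (hV1 δ hδ)
    have hmean : ∀ j ∈ J,
        binomialMean δ (p j) N ≤ binomialMean δ (p j) V + p j ^ δ * (N δ - V δ) := by
      intro j hj
      have hpow : p j ^ δ < 1 :=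
        (single_le_sum (fun i hi ↦ pow_nonneg (hp0 i hi) δ) hj).trans_lt (hp δ hδ)
      have hq : 0 ≤ 1 - p j :=
        sub_nonneg.2 ((pow_lt_one_iff_of_nonneg (hp0 j hj) (by lia)).1 hpow).le
      have hlt : ∑ i ∈ range δ, (δ.choose i : ℝ) * p j ^ i * (1 - p j) ^ (δ - i) * N i ≤
          ∑ i ∈ range δ, (δ.choose i : ℝ) * p j ^ i * (1 - p j) ^ (δ - i) * V i :=
        sum_le_sum fun i hi ↦ mul_le_mul_of_nonneg_left (ih i (mem_range.1 hi)) <|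
          mul_nonneg (mul_nonneg (Nat.cast_nonneg _) (pow_nonneg (hp0 j hj) _)) (pow_nonneg hq _)
      rw [binomialMean_eq_sum_range_add, binomialMean_eq_sum_range_add]
      linarith
    have hsum := sum_le_sum hmean
    rw [sum_add_distrib, ← sum_mul] at hsum
    have hdiff : N δ - V δ ≤ (∑ j ∈ J, p j ^ δ) * (N δ - V δ) := by
      linarith [hV δ hδ, hN.eq_one_add_sum_binomialMean hδ (hp δ hδ).ne]
    nlinarith [hp δ hδ]

lemma sum_pow_lt_one (hp0 : ∀ j ∈ J, 0 ≤ p j) (hp1 : ∀ j ∈ J, p j < 1) (hsum : ∑ j ∈ J, p j = 1)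
    {n : ℕ} (hn : 1 < n) : ∑ j ∈ J, p j ^ n < 1 := by
  obtain ⟨j, hj, hpos⟩ : ∃ j ∈ J, 0 < p j := exists_lt_of_sum_lt (by simp [hsum])
  rw [← hsum]
  exact sum_lt_sum (fun i hi ↦ pow_le_of_le_one (hp0 i hi) (hp1 i hi).le (by lia))
    ⟨j, hj, pow_lt_self_of_lt_one₀ hpos (hp1 j hj) hn⟩

lemma exp_neg_le_one_sub_mul {x : ℝ} (hx0 : 0 ≤ x) (hx1 : x ≤ 1) :
    Real.exp (-x) ≤ 1 - (1 - Real.exp (-1)) * x := by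
  have h := convexOn_exp.2 (Set.mem_univ 0) (Set.mem_univ (-1)) (sub_nonneg.2 hx1) hx0
    (sub_add_cancel 1 x)
  simp only [smul_eq_mul, mul_zero, mul_neg, mul_one, zero_add, Real.exp_zero] at h
  linarith

lemma one_sub_mul_pow_le {s x : ℝ} {n : ℕ} (hs : s ≤ 2) (hsn : 2 ≤ s * n) (hx0 : 0 ≤ x)
    (hx : x ≤ 1 / 2) : (1 - s * x) ^ n ≤ 1 - 5 / 4 * x := by
  have hsx : 0 ≤ 1 - s * x := by nlinarith
  calc (1 - s * x) ^ n ≤ Real.exp (-(s * x)) ^ n :=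
        pow_le_pow_left₀ hsx (Real.one_sub_le_exp_neg _) n
    _ = Real.exp (-(s * n * x)) := by rw [← Real.exp_nat_mul]; ring_nf
    _ ≤ Real.exp (-(2 * x)) := by gcongr
    _ ≤ 1 - (1 - Real.exp (-1)) * (2 * x) := exp_neg_le_one_sub_mul (by linarith) (by linarith)
    _ ≤ 1 - 5 / 4 * x := by nlinarith [Real.exp_neg_one_lt_d9]

/-- The function `1 + K (s δ - 1 + (1 - s) ^ δ)` that dominates PSR sequences for suitable `K` and
`s`: about `K s δ` for large `δ`, but of second order in `s δ` for small `δ`. -/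
def psrPotential (K s : ℝ) (δ : ℕ) : ℝ :=
  1 + K * (s * δ - 1 + (1 - s) ^ δ)

lemma one_le_psrPotential {K s : ℝ} (hK : 0 ≤ K) (hs : s ≤ 2) (δ : ℕ) : 1 ≤ psrPotential K s δ := by
  have hbernoulli := one_add_mul_le_pow (neg_le_neg hs) δ
  rw [← sub_eq_add_neg] at hbernoulli
  exact le_add_of_nonneg_right (mul_nonneg hK (by linarith))

lemma psrPotential_le {K s : ℝ} (hK : 0 ≤ K) (hs0 : 0 ≤ s) (hs2 : s ≤ 2) (δ : ℕ) :
    psrPotential K s δ ≤ 1 + K * (s * δ) := by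
  have hpow : (1 - s) ^ δ ≤ 1 :=
    le_of_abs_le <| (abs_pow _ _).trans_le <|
      pow_le_one₀ (abs_nonneg _) (abs_le.2 ⟨by linarith, by linarith⟩)
  unfold psrPotential
  gcongr
  linarith

lemma binomialMean_psrPotential (K s : ℝ) (n : ℕ) (x : ℝ) :
    binomialMean n x (psrPotential K s) = 1 + K * (s * (n * x) - 1 + (1 - s * x) ^ n) := by
  have hlinear : psrPotential K s = fun i : ℕ ↦ (1 - K) + K * s * i + K * (1 - s) ^ i := by
    funext i
    rw [psrPotential]
    ring
  simp only [hlinear, binomialMean_add, binomialMean_const_mul, binomialMean_const,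
    binomialMean_natCast, binomialMean_pow]
  ring

lemma psrPotential_supersolution (hp0 : ∀ j ∈ J, 0 ≤ p j) (hp : ∀ j ∈ J, p j ≤ 1 / 2)
    (hsum : ∑ j ∈ J, p j = 1) {s : ℝ} (hs : s ≤ 1) {δ : ℕ} (hsδ : 2 ≤ s * δ) :
    1 + ∑ j ∈ J, binomialMean δ (p j) (psrPotential (4 * #J) s) ≤ psrPotential (4 * #J) s δ := by
  have hgeom : ∑ j ∈ J, (1 - s * p j) ^ δ ≤ #J - 5 / 4 := by
    calc ∑ j ∈ J, (1 - s * p j) ^ δ ≤ ∑ j ∈ J, (1 - 5 / 4 * p j) :=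
          sum_le_sum fun j hj ↦ one_sub_mul_pow_le (by linarith) hsδ (hp0 j hj) (hp j hj)
      _ = #J - 5 / 4 := by simp [← mul_sum, hsum]
  have hmean : ∑ j ∈ J, binomialMean δ (p j) (psrPotential (4 * #J) s) =
      #J + 4 * #J * (s * δ - #J + ∑ j ∈ J, (1 - s * p j) ^ δ) := by
    simp [binomialMean_psrPotential, sum_add_distrib, ← mul_sum, hsum]
  have hpow : 0 ≤ (1 - s) ^ δ := pow_nonneg (sub_nonneg.2 hs) δ
  calc 1 + ∑ j ∈ J, binomialMean δ (p j) (psrPotential (4 * #J) s)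
      ≤ 1 + (#J + 4 * #J * (s * δ - #J + (#J - 5 / 4))) := by rw [hmean]; gcongr
    _ = 1 + 4 * #J * (s * δ - 1 + 0) := by ring
    _ ≤ psrPotential (4 * #J) s δ := by unfold psrPotential; gcongr

lemma IsPSRSequence.le_one_add (hN : IsPSRSequence J p m N) (hm : 1 ≤ m) (hp0 : ∀ j ∈ J, 0 ≤ p j)
    (hp : ∀ j ∈ J, p j ≤ 1 / 2) (hsum : ∑ j ∈ J, p j = 1) (δ : ℕ) :
    N δ ≤ 1 + 8 * #J * δ / (m + 1) := by
  have hm' : (1 : ℝ) ≤ m := mod_cast hm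
  have hs1 : 2 / ((m : ℝ) + 1) ≤ 1 := (div_le_one (by linarith)).2 (by linarith)
  have hV : ∀ n, m < n → 2 ≤ 2 / ((m : ℝ) + 1) * n := fun n hn ↦ by
    have hn' : (m : ℝ) + 1 ≤ n := mod_cast hn
    rw [div_mul_eq_mul_div, le_div_iff₀ (by positivity)]
    gcongr
  calc N δ ≤ psrPotential (4 * #J) (2 / (m + 1)) δ :=
        hN.le_of_supersolution hp0
          (fun n hn ↦ sum_pow_lt_one hp0 (fun j hj ↦ (hp j hj).trans_lt (by norm_num)) hsum
            (hm.trans_lt hn))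
          (fun n _ ↦ one_le_psrPotential (by positivity) (by linarith) n)
          (fun n hn ↦ psrPotential_supersolution hp0 hp hsum hs1 (hV n hn)) δ
    _ ≤ 1 + 4 * #J * (2 / (m + 1) * δ) :=
        psrPotential_le (by positivity) (by positivity) (by linarith) δ
    _ = 1 + 8 * #J * δ / (m + 1) := by ring

theorem psr_fair_upper_bound_general (hN : IsPSRSequence J p m N) (hm : 1 ≤ m)
    (hp0 : ∀ j ∈ J, 0 ≤ p j) (hp : ∀ j ∈ J, p j ≤ 1 / 2) (hsum : ∑ j ∈ J, p j = 1)
    {δ : ℕ} (hδ : m < δ) : N δ ≤ 8 * Real.exp 1 * (#J + 1) * δ / (m + 1) := by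
  have hδ' : (m : ℝ) + 1 ≤ δ := mod_cast hδ
  calc N δ ≤ 1 + 8 * #J * δ / (m + 1) := hN.le_one_add hm hp0 hp hsum δ
    _ ≤ 8 * (δ / (m + 1)) + 8 * #J * δ / (m + 1) := by
        gcongr
        linarith [(one_le_div (by positivity : (0 : ℝ) < m + 1)).2 hδ']
    _ = 8 * 1 * (#J + 1) * δ / (m + 1) := by ring
    _ ≤ 8 * Real.exp 1 * (#J + 1) * δ / (m + 1) := by
        gcongr
        exact Real.one_le_exp zero_le_one

end Bounds

/-- For fair partitioning probabilities `p j = 1/c`, the PSR sequence `N`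
(defined by `N δ = 1` for `δ ≤ m` and the general PSR recursion for `δ > m`)
satisfies, for every `δ > m`, the bound `N δ ≤ 8 e (c+1) δ / (m+1)`,
where `e` is Euler's number. -/
theorem psr_fair_upper_bound
    (c m : ℕ) (hc : 2 ≤ c) (hm : 1 ≤ m)
    (p : ℕ → ℝ)
    (hfair : ∀ j ∈ Finset.Icc 1 c, p j = 1 / (c : ℝ))
    (N : ℕ → ℝ)
    (hN0 : ∀ δ, δ ≤ m → N δ = 1)
    (hNrec : ∀ δ, m < δ → N δ =
      (1 + ∑ j ∈ Finset.Icc 1 c, ∑ i ∈ Finset.range δ,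
          (δ.choose i : ℝ) * p j ^ i * (1 - p j) ^ (δ - i) * N i) /
        (1 - ∑ j ∈ Finset.Icc 1 c, p j ^ δ)) :
    ∀ δ, m < δ → N δ ≤ 8 * Real.exp 1 * ((c : ℝ) + 1) * (δ : ℝ) / ((m : ℝ) + 1) := by
  have hc0 : (c : ℝ) ≠ 0 := by positivity
  intro δ hδ
  simpa using psr_fair_upper_bound_general ⟨hN0, hNrec⟩ hm
    (fun j hj ↦ (hfair j hj).symm ▸ by positivity)
    (fun j hj ↦ (hfair j hj).symm ▸ one_div_le_one_div_of_le two_pos (mod_cast hc))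
    (by simp [sum_congr rfl hfair, hc0]) hδ
end

section
/- Fix integers c ≥ 2 and m̄ ≥ 1 and reals p_1, …, p_c ∈ (0,1) with p_1 + … + p_c = 1, and let N̄ be the PSR sequence and T̄ the EPSR exchange sequence for the same parameters. Then T̄_δ ≤ N̄_δ for every δ ≥ 0, and T̄_δ < N̄_δ for every δ > m̄; that is, in expectation EPSR never exchanges more Set Reconciliation data structures than PSR. -/
/-!
Both sequences are driven by the same operator, which averages the earlier values with nonnegative
binomial weights and is therefore monotone, and both are normalised by the same positive
denominator. PSR then pays `1` for the exchange at the current node, whereas EPSR pays nothing and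
even subtracts a nonnegative saving, so the strict comparison propagates by strong induction.
-/

theorem le_and_lt_of_wellFounded_step {ι α : Type*} [LinearOrder ι] [WellFoundedLT ι] [Preorder α]
    {x y : ι → α} {m : ι} (base : ∀ n ≤ m, x n ≤ y n)
    (step : ∀ n, m < n → (∀ i < n, x i ≤ y i) → x n < y n) :
    (∀ n, x n ≤ y n) ∧ ∀ n, m < n → x n < y n := by
  have le_all (n : ι) : x n ≤ y n := by
    induction n using WellFoundedLT.induction with
    | ind n ih => exact (le_or_gt n m).elim (base n) fun hn => (step n hn ih).le
  exact ⟨le_all, fun n hn => step n hn fun i _ => le_all i⟩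

theorem sum_mem_Icc_zero_one_of_subset {ι M : Type*} [AddCommMonoid M] [One M] [PartialOrder M]
    [IsOrderedAddMonoid M] {s t : Finset ι} {p : ι → M} (hts : t ⊆ s) (hp : ∀ j ∈ s, 0 ≤ p j)
    (hsum : ∑ j ∈ s, p j ≤ 1) : ∑ j ∈ t, p j ∈ Set.Icc 0 1 :=
  ⟨Finset.sum_nonneg fun j hj => hp j (hts hj),
    (Finset.sum_le_sum_of_subset_of_nonneg hts fun j hj _ => hp j hj).trans hsum⟩

section Splitting

variable {ι R : Type*} [Ring R]

/-- The expected total cost of the parts when `n` elements are distributed independently, each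
landing in part `j ∈ s` with probability `p j`, and a part with `i` elements costs `x i`. Parts
receiving all `n` elements are left out: the recursions for `x n` carry them in their
denominator. -/
def splitCost (s : Finset ι) (p : ι → R) (x : ℕ → R) (n : ℕ) : R :=
  ∑ j ∈ s, ∑ i ∈ Finset.range n, (n.choose i : R) * p j ^ i * (1 - p j) ^ (n - i) * x i

/-- The expected number of stages `j ∈ s` at which EPSR saves an exchange: `F j` is the probability
that an element lies in the parts treated up to stage `j`, and the exchange is saved when at most
`m` of the `n` elements lie outside them. -/
def expectedSaving (s : Finset ι) (F : ι → R) (m n : ℕ) : R :=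
  ∑ j ∈ s, ∑ i ∈ Finset.range (m + 1), (n.choose i : R) * (1 - F j) ^ i * F j ^ (n - i)

theorem splitCost_le_splitCost [PartialOrder R] [IsOrderedRing R] {s : Finset ι} {p : ι → R}
    {x y : ℕ → R} {n : ℕ} (hp : ∀ j ∈ s, p j ∈ Set.Icc 0 1) (hxy : ∀ i < n, x i ≤ y i) :
    splitCost s p x n ≤ splitCost s p y n := by
  refine Finset.sum_le_sum fun j hj => Finset.sum_le_sum fun i hi => ?_
  have p_nonneg : 0 ≤ p j := (hp j hj).1
  have one_sub_nonneg : 0 ≤ 1 - p j := sub_nonneg.mpr (hp j hj).2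
  exact mul_le_mul_of_nonneg_left (hxy i (Finset.mem_range.mp hi)) (by positivity)

theorem expectedSaving_nonneg [PartialOrder R] [IsOrderedRing R] {s : Finset ι} {F : ι → R}
    (hF : ∀ j ∈ s, F j ∈ Set.Icc 0 1) (m n : ℕ) : 0 ≤ expectedSaving s F m n := by
  refine Finset.sum_nonneg fun j hj => Finset.sum_nonneg fun i _ => ?_
  have F_nonneg : 0 ≤ F j := (hF j hj).1
  have one_sub_nonneg : 0 ≤ 1 - F j := sub_nonneg.mpr (hF j hj).2
  positivity

theorem sum_pow_lt_one_s7 [LinearOrder R] [IsStrictOrderedRing R] {s : Finset ι} {p : ι → R} {n : ℕ}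
    (hn : 1 < n) (hp : ∀ j ∈ s, p j ∈ Set.Ico 0 1) (hsum : ∑ j ∈ s, p j ≤ 1) :
    ∑ j ∈ s, p j ^ n < 1 := by
  have pow_le : ∀ j ∈ s, p j ^ n ≤ p j := fun j hj =>
    pow_le_of_le_one (hp j hj).1 (hp j hj).2.le (by lia)
  by_cases h : ∃ j ∈ s, 0 < p j
  · obtain ⟨j, hj, p_pos⟩ := h
    have pow_lt : p j ^ n < p j := pow_lt_self_of_lt_one₀ p_pos (hp j hj).2 hn
    exact (Finset.sum_lt_sum pow_le ⟨j, hj, pow_lt⟩).trans_le hsum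
  · push Not at h
    calc ∑ j ∈ s, p j ^ n ≤ ∑ j ∈ s, p j := Finset.sum_le_sum pow_le
      _ ≤ 0 := Finset.sum_nonpos h
      _ < 1 := zero_lt_one

end Splitting

theorem epsr_exchange_le_psr_general {K : Type*} [Field K] [LinearOrder K] [IsStrictOrderedRing K]
    (c m : ℕ) (hm : 1 ≤ m) (p : ℕ → K) (hp : ∀ j ∈ Finset.Icc 1 c, p j ∈ Set.Ico 0 1)
    (hsum : ∑ j ∈ Finset.Icc 1 c, p j ≤ 1)
    (F : ℕ → K) (hF : ∀ j, F j = ∑ i ∈ Finset.Icc 1 j, p i)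
    (N : ℕ → K) (hN0 : ∀ δ, δ ≤ m → N δ = 1)
    (hNrec : ∀ δ, m < δ → N δ =
      (1 + splitCost (Finset.Icc 1 c) p N δ) / (1 - ∑ j ∈ Finset.Icc 1 c, p j ^ δ))
    (T : ℕ → K) (hT0 : ∀ δ, δ ≤ m → T δ = 1)
    (hTrec : ∀ δ, m < δ → T δ =
      (splitCost (Finset.Icc 1 c) p T δ - expectedSaving (Finset.Icc 1 (c - 2)) F m δ) /
        (1 - ∑ j ∈ Finset.Icc 1 c, p j ^ δ)) :
    (∀ δ, T δ ≤ N δ) ∧ (∀ δ, m < δ → T δ < N δ) := by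
  have F_mem : ∀ j ∈ Finset.Icc 1 (c - 2), F j ∈ Set.Icc 0 1 := fun j hj => by
    have j_le : j ≤ c := (Finset.mem_Icc.mp hj).2.trans (Nat.sub_le c 2)
    rw [hF j]
    exact sum_mem_Icc_zero_one_of_subset (Finset.Icc_subset_Icc_right j_le)
      (fun i hi => (hp i hi).1) hsum
  refine le_and_lt_of_wellFounded_step (fun δ hδ => (hT0 δ hδ).trans_le (hN0 δ hδ).ge)
    fun δ hδ ih => ?_
  have cost_le : splitCost (Finset.Icc 1 c) p T δ ≤ splitCost (Finset.Icc 1 c) p N δ :=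
    splitCost_le_splitCost (fun j hj => Set.Ico_subset_Icc_self (hp j hj)) ih
  have saving_nonneg := expectedSaving_nonneg F_mem m δ
  have sum_pow_lt := sum_pow_lt_one_s7 (hm.trans_lt hδ) hp hsum
  rw [hTrec δ hδ, hNrec δ hδ]
  exact div_lt_div_of_pos_right (by linarith) (sub_pos.mpr sum_pow_lt)

/-- With the same parameters `c ≥ 2`, `m ≥ 1` and probabilities
`p 1, …, p c ∈ (0,1)` summing to `1`, the EPSR exchange sequence `T` never
exceeds the PSR sequence `N`: `T δ ≤ N δ` for every `δ ≥ 0`, and the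
inequality is strict for every `δ > m`. -/
theorem epsr_exchange_le_psr
    (c m : ℕ) (hc : 2 ≤ c) (hm : 1 ≤ m)
    (p : ℕ → ℝ)
    (hp : ∀ j ∈ Finset.Icc 1 c, p j ∈ Set.Ioo (0 : ℝ) 1)
    (hsum : ∑ j ∈ Finset.Icc 1 c, p j = 1)
    (F : ℕ → ℝ)
    (hF : ∀ j, F j = ∑ i ∈ Finset.Icc 1 j, p i)
    (N : ℕ → ℝ)
    (hN0 : ∀ δ, δ ≤ m → N δ = 1)
    (hNrec : ∀ δ, m < δ → N δ =
      (1 + ∑ j ∈ Finset.Icc 1 c, ∑ i ∈ Finset.range δ,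
          (δ.choose i : ℝ) * p j ^ i * (1 - p j) ^ (δ - i) * N i) /
        (1 - ∑ j ∈ Finset.Icc 1 c, p j ^ δ))
    (T : ℕ → ℝ)
    (hT0 : ∀ δ, δ ≤ m → T δ = 1)
    (hTrec : ∀ δ, m < δ → T δ =
      ((∑ j ∈ Finset.Icc 1 c, ∑ i ∈ Finset.range δ,
          (δ.choose i : ℝ) * p j ^ i * (1 - p j) ^ (δ - i) * T i)
        - ∑ j ∈ Finset.Icc 1 (c - 2), ∑ i ∈ Finset.range (m + 1),
            (δ.choose i : ℝ) * (1 - F j) ^ i * F j ^ (δ - i)) /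
        (1 - ∑ j ∈ Finset.Icc 1 c, p j ^ δ)) :
    (∀ δ, T δ ≤ N δ) ∧ (∀ δ, m < δ → T δ < N δ) :=
  epsr_exchange_le_psr_general c m hm p (fun j hj => Set.Ioo_subset_Ico_self (hp j hj)) hsum.le
    F hF N hN0 hNrec T hT0 hTrec
end

section
/- Fix integers c ≥ 2 and m̄ ≥ 1 and reals p_1, …, p_c ∈ (0,1) with p_1 + … + p_c = 1, and let T̄ be the EPSR exchange sequence and Ū the EPSR recovery sequence for the same parameters. Then Ū_δ ≥ T̄_δ for every δ ≥ 0, and Ū_δ > T̄_δ for every δ > m̄; that is, in expectation EPSR performs at least as many recovery calls as the number of Set Reconciliation data structures it exchanges. -/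
/-!
Both sequences obey the same linear recursion with nonnegative coefficients and a positive
denominator; above the threshold `m` the recursion for `U` merely has the source term
`(c - 1) - 2 S` where the one for `T` has `-S`. Each of the `c - 2` inner sums of `S` is the
probability that a binomial variable with success probability `1 - F j` is at most `m`, so
`S ≤ c - 2 < c - 1`. The source term of `U` is therefore strictly the larger one, and strong
induction propagates the comparison.
-/

section BinomialSums

variable {ι R : Type*} [PartialOrder R]

theorem sum_choose_mul_pow_mul_pow_le_add_pow [CommSemiring R] [IsOrderedRing R] {a b : R}
    (ha : 0 ≤ a) (hb : 0 ≤ b) (n : ℕ) (t : Finset ℕ) :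
    ∑ i ∈ t, (n.choose i : R) * a ^ i * b ^ (n - i) ≤ (a + b) ^ n := by
  have term_nonneg (i : ℕ) : 0 ≤ (n.choose i : R) * a ^ i * b ^ (n - i) := by positivity
  have term_eq_zero {i : ℕ} (hi : i ∉ Finset.range (n + 1)) :
      (n.choose i : R) * a ^ i * b ^ (n - i) = 0 := by
    rw [Nat.choose_eq_zero_of_lt (by simpa using hi), Nat.cast_zero, zero_mul, zero_mul]
  calc ∑ i ∈ t, (n.choose i : R) * a ^ i * b ^ (n - i)
      ≤ ∑ i ∈ Finset.range (n + 1) ∪ t, (n.choose i : R) * a ^ i * b ^ (n - i) :=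
        Finset.sum_le_sum_of_subset_of_nonneg Finset.subset_union_right
          fun i _ _ => term_nonneg i
    _ = ∑ i ∈ Finset.range (n + 1), (n.choose i : R) * a ^ i * b ^ (n - i) :=
        (Finset.sum_subset Finset.subset_union_left fun _ _ => term_eq_zero).symm
    _ = (a + b) ^ n := by
        rw [add_pow]
        exact Finset.sum_congr rfl fun i _ => by ring

theorem sum_sum_choose_mul_one_sub_pow_mul_pow_le_card [CommRing R] [IsOrderedRing R]
    {s : Finset ι} {q : ι → R} (hq : ∀ j ∈ s, q j ∈ Set.Icc 0 1) (n : ℕ) (t : Finset ℕ) :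
    ∑ j ∈ s, ∑ i ∈ t, (n.choose i : R) * (1 - q j) ^ i * q j ^ (n - i) ≤ s.card := by
  rw [Finset.cast_card]
  refine Finset.sum_le_sum fun j hj => ?_
  simpa only [sub_add_cancel, one_pow] using
    sum_choose_mul_pow_mul_pow_le_add_pow (sub_nonneg.2 (hq j hj).2) (hq j hj).1 n t

theorem sum_sum_choose_mul_pow_mul_one_sub_pow_mul_le [Ring R] [IsOrderedRing R]
    {s : Finset ι} {q : ι → R} (hq : ∀ j ∈ s, q j ∈ Set.Icc 0 1) (n : ℕ) {t : Finset ℕ}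
    {x y : ℕ → R} (hxy : ∀ i ∈ t, x i ≤ y i) :
    ∑ j ∈ s, ∑ i ∈ t, (n.choose i : R) * q j ^ i * (1 - q j) ^ (n - i) * x i ≤
      ∑ j ∈ s, ∑ i ∈ t, (n.choose i : R) * q j ^ i * (1 - q j) ^ (n - i) * y i := by
  refine Finset.sum_le_sum fun j hj => Finset.sum_le_sum fun i hi => ?_
  have hq_nonneg : 0 ≤ q j := (hq j hj).1
  have one_sub_nonneg : 0 ≤ 1 - q j := sub_nonneg.2 (hq j hj).2
  exact mul_le_mul_of_nonneg_left (hxy i hi) (by positivity)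

end BinomialSums

section SubsetAndPowerSums

variable {ι R : Type*} [PartialOrder R]

theorem sum_mem_Icc_of_subset [AddCommMonoid R] [IsOrderedAddMonoid R] {s t : Finset ι}
    {p : ι → R} (hst : s ⊆ t) (hp : ∀ i ∈ t, 0 ≤ p i) :
    ∑ i ∈ s, p i ∈ Set.Icc 0 (∑ i ∈ t, p i) :=
  ⟨Finset.sum_nonneg fun i hi => hp i (hst hi),
    Finset.sum_le_sum_of_subset_of_nonneg hst fun i hi _ => hp i hi⟩

theorem sum_pow_lt_sum [Semiring R] [IsStrictOrderedRing R] {s : Finset ι} {p : ι → R}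
    (hs : s.Nonempty) (hp : ∀ i ∈ s, p i ∈ Set.Ioo 0 1) {n : ℕ} (hn : 1 < n) :
    ∑ i ∈ s, p i ^ n < ∑ i ∈ s, p i :=
  Finset.sum_lt_sum_of_nonempty hs fun i hi => pow_lt_self_of_lt_one₀ (hp i hi).1 (hp i hi).2 hn

end SubsetAndPowerSums

/-- With the same parameters `c ≥ 2`, `m ≥ 1` and probabilities
`p 1, …, p c ∈ (0,1)` summing to `1`, the EPSR recovery sequence `U` dominates
the EPSR exchange sequence `T`: `U δ ≥ T δ` for every `δ ≥ 0`, and the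
inequality is strict for every `δ > m`. -/
theorem epsr_recovery_ge_exchange
    (c m : ℕ) (hc : 2 ≤ c) (hm : 1 ≤ m)
    (p : ℕ → ℝ)
    (hp : ∀ j ∈ Finset.Icc 1 c, p j ∈ Set.Ioo (0 : ℝ) 1)
    (hsum : ∑ j ∈ Finset.Icc 1 c, p j = 1)
    (F : ℕ → ℝ)
    (hF : ∀ j, F j = ∑ i ∈ Finset.Icc 1 j, p i)
    (T : ℕ → ℝ)
    (hT0 : ∀ δ, δ ≤ m → T δ = 1)
    (hTrec : ∀ δ, m < δ → T δ =
      ((∑ j ∈ Finset.Icc 1 c, ∑ i ∈ Finset.range δ,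
          (δ.choose i : ℝ) * p j ^ i * (1 - p j) ^ (δ - i) * T i)
        - ∑ j ∈ Finset.Icc 1 (c - 2), ∑ i ∈ Finset.range (m + 1),
            (δ.choose i : ℝ) * (1 - F j) ^ i * F j ^ (δ - i)) /
        (1 - ∑ j ∈ Finset.Icc 1 c, p j ^ δ))
    (U : ℕ → ℝ)
    (hU0 : ∀ δ, δ ≤ m → U δ = 1)
    (hUrec : ∀ δ, m < δ → U δ =
      ((∑ j ∈ Finset.Icc 1 c, ∑ i ∈ Finset.range δ,
          (δ.choose i : ℝ) * p j ^ i * (1 - p j) ^ (δ - i) * U i)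
        + ((c : ℝ) - 1)
        - 2 * ∑ j ∈ Finset.Icc 1 (c - 2), ∑ i ∈ Finset.range (m + 1),
            (δ.choose i : ℝ) * (1 - F j) ^ i * F j ^ (δ - i)) /
        (1 - ∑ j ∈ Finset.Icc 1 c, p j ^ δ)) :
    (∀ δ, T δ ≤ U δ) ∧ (∀ δ, m < δ → T δ < U δ) := by
  have hF_mem : ∀ j ∈ Finset.Icc 1 (c - 2), F j ∈ Set.Icc (0 : ℝ) 1 := by
    intro j hj
    have hjc : j ≤ c := (Finset.mem_Icc.1 hj).2.trans (Nat.sub_le c 2)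
    rw [hF, ← hsum]
    exact sum_mem_Icc_of_subset (Finset.Icc_subset_Icc_right hjc) fun i hi => (hp i hi).1.le
  have lt_of_forall_lt_le (δ : ℕ) (hδ : m < δ) (hTU : ∀ i < δ, T i ≤ U i) : T δ < U δ := by
    have den_pos : 0 < 1 - ∑ j ∈ Finset.Icc 1 c, p j ^ δ := by
      rw [sub_pos, ← hsum]
      exact sum_pow_lt_sum (Finset.nonempty_Icc.2 (by lia)) hp (by lia)
    have S_le := sum_sum_choose_mul_one_sub_pow_mul_pow_le_card hF_mem δ (Finset.range (m + 1))
    have branch_le := sum_sum_choose_mul_pow_mul_one_sub_pow_mul_le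
      (fun j hj => Set.Ioo_subset_Icc_self (hp j hj)) δ fun i hi => hTU i (Finset.mem_range.1 hi)
    rw [hTrec δ hδ, hUrec δ hδ]
    refine div_lt_div_of_pos_right ?_ den_pos
    rw [Nat.card_Icc, Nat.add_sub_cancel, Nat.cast_sub hc, Nat.cast_two] at S_le
    linarith
  have T_le_U (δ : ℕ) : T δ ≤ U δ := by
    induction δ using Nat.strong_induction_on with
    | _ δ hTU =>
      rcases le_or_gt δ m with hδ | hδ
      · rw [hT0 δ hδ, hU0 δ hδ]
      · exact (lt_of_forall_lt_le δ hδ hTU).le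
  exact ⟨T_le_U, fun δ hδ => lt_of_forall_lt_le δ hδ fun i _ => T_le_U i⟩
end
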